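/- There exists a constant C > 0 such that for all integers n ≥ k ≥ 3, every set S of n distinct points in ℝ² contains a subset T ⊆ S with |T| = k such that every angle ∠ABC formed by pairwise distinct A, B, C ∈ T satisfies min(∠ABC, 180° − ∠ABC) ≤ C · log(k)/log(n) degrees. Equivalently, Δ_k(n) ≤ C·log(k)/log(n), where Δ_k(n) = 90° − Γ_k(n). -/

import Mathlib

open EuclideanGeometry Real

/-- If finitely many transitive irreflexive relations `R i` are such that any two distinct points
of `S` are comparable for one of them, and `S` has more than `m ^ r` points, then `S` contains a
chain of `m + 1` points for one of the relations. -/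
theorem exists_chain_of_pow_lt_card {α : Type*} {r m : ℕ} (S : Finset α)
    (R : Fin r → α → α → Prop) (irrefl : ∀ i x, ¬ R i x x)
    (trans : ∀ i x y z, R i x y → R i y z → R i x z)
    (total : ∀ x ∈ S, ∀ y ∈ S, x ≠ y → ∃ i, R i x y ∨ R i y x)
    (hcard : m ^ r < S.card) :
    ∃ i, ∃ T ⊆ S, T.card = m + 1 ∧ ∀ x ∈ T, ∀ y ∈ T, x ≠ y → R i x y ∨ R i y x := by
  classical
  by_contra! hno
  let chains : Fin r → α → Finset (Finset α) := fun i x => S.powerset.filter fun T =>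
    x ∈ T ∧ (∀ y ∈ T, y ≠ x → R i y x) ∧ ∀ y ∈ T, ∀ z ∈ T, y ≠ z → R i y z ∨ R i z y
  let rank : α → Fin r → ℕ := fun x i => (chains i x).sup Finset.card
  have singleton_mem : ∀ i, ∀ x ∈ S, {x} ∈ chains i x := by
    intro i x hx
    simp only [chains, Finset.mem_filter, Finset.mem_powerset, Finset.singleton_subset_iff]
    refine ⟨hx, Finset.mem_singleton_self x, ?_, ?_⟩ <;> grind
  have card_le : ∀ i x, ∀ T ∈ chains i x, T.card ≤ m := by
    intro i x T hT
    simp only [chains, Finset.mem_filter, Finset.mem_powerset] at hT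
    obtain ⟨hTS, -, -, hchain⟩ := hT
    by_contra! hlt
    obtain ⟨U, hUT, hU⟩ := Finset.exists_subset_card_eq (show m + 1 ≤ T.card from hlt)
    obtain ⟨y, hy, z, hz, hyz, h⟩ := hno i U (hUT.trans hTS) hU
    rcases hchain y (hUT hy) z (hUT hz) hyz with h' | h'
    · exact h.1 h'
    · exact h.2 h'
  have rank_lt : ∀ i x, x ∈ S → ∀ y ∈ S, R i x y → rank x i < rank y i := by
    intro i x hx y hy hxy
    obtain ⟨T, hT, hrank⟩ :=
      Finset.exists_mem_eq_sup (chains i x) ⟨_, singleton_mem i x hx⟩ Finset.card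
    have hT' := hT
    simp only [chains, Finset.mem_filter, Finset.mem_powerset] at hT'
    obtain ⟨hTS, hxT, hlast, hchain⟩ := hT'
    have below : ∀ z ∈ T, R i z y := by
      intro z hz
      by_cases hzx : z = x
      · exact hzx ▸ hxy
      · exact trans i z x y (hlast z hz hzx) hxy
    have hyT : y ∉ T := fun h => irrefl i y (below y h)
    have hmem : insert y T ∈ chains i y := by
      simp only [chains, Finset.mem_filter, Finset.mem_powerset]
      refine ⟨Finset.insert_subset hy hTS, Finset.mem_insert_self y T, ?_, ?_⟩ <;> grind
    have hle : (insert y T).card ≤ rank y i := Finset.le_sup (f := Finset.card) hmem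
    rw [Finset.card_insert_of_notMem hyT] at hle
    change (chains i x).sup Finset.card < _
    omega
  have maps : ∀ x ∈ S, rank x ∈ Fintype.piFinset fun _ : Fin r => Finset.Icc 1 m := by
    intro x hx
    simp only [Fintype.mem_piFinset, Finset.mem_Icc]
    intro i
    exact ⟨Finset.le_sup (f := Finset.card) (singleton_mem i x hx), Finset.sup_le (card_le i x)⟩
  obtain ⟨x, hx, y, hy, hxy, heq⟩ :=
    Finset.exists_ne_map_eq_of_card_lt_of_maps_to (by simpa using hcard) maps
  obtain ⟨i, h | h⟩ := total x hx y hy hxy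
  · exact (rank_lt i x hx y hy h).ne (congrFun heq i)
  · exact (rank_lt i y hy x hx h).ne' (congrFun heq i)

section Cone

variable {V : Type*} [NormedAddCommGroup V] [InnerProductSpace ℝ V]

/-- The nonzero vectors that make an angle of at most `δ` with the unit vector `e`, for
`0 ≤ δ ≤ π`. -/
def InCone (e : V) (δ : ℝ) (v : V) : Prop :=
  v ≠ 0 ∧ cos δ * ‖v‖ ≤ inner ℝ v e

theorem InCone.add {e : V} {δ : ℝ} (hδ : 0 < cos δ) {u v : V}
    (hu : InCone e δ u) (hv : InCone e δ v) : InCone e δ (u + v) := by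
  obtain ⟨hu0, hu⟩ := hu
  obtain ⟨-, hv⟩ := hv
  have hinner : cos δ * ‖u‖ + cos δ * ‖v‖ ≤ inner ℝ (u + v) e := by
    rw [inner_add_left]
    exact add_le_add hu hv
  refine ⟨fun h => ?_, ?_⟩
  · rw [h, inner_zero_left] at hinner
    have := mul_pos hδ (norm_pos_iff.2 hu0)
    have := mul_nonneg hδ.le (norm_nonneg v)
    linarith
  · have := mul_le_mul_of_nonneg_left (norm_add_le u v) hδ.le
    linarith

theorem InCone.angle_le {e : V} {δ : ℝ} (he : ‖e‖ = 1) (h0 : 0 ≤ δ) (hπ : δ ≤ π) {v : V}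
    (hv : InCone e δ v) : InnerProductGeometry.angle v e ≤ δ := by
  have hle : cos δ ≤ inner ℝ v e / (‖v‖ * ‖e‖) := by
    rw [he, mul_one, le_div_iff₀ (norm_pos_iff.2 hv.1)]
    exact hv.2
  calc InnerProductGeometry.angle v e ≤ arccos (cos δ) := arccos_le_arccos hle
    _ = δ := arccos_cos h0 hπ

theorem InCone.angle_le_two_mul {e : V} {δ : ℝ} (he : ‖e‖ = 1) (h0 : 0 ≤ δ) (hπ : δ ≤ π)
    {u v : V} (hu : InCone e δ u) (hv : InCone e δ v) :
    InnerProductGeometry.angle u v ≤ 2 * δ := by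
  have h := InnerProductGeometry.angle_le_angle_add_angle u e v
  have h₁ := hu.angle_le he h0 hπ
  have h₂ := hv.angle_le he h0 hπ
  rw [InnerProductGeometry.angle_comm] at h₂
  linarith

/-- If each of `u`, `v` lies in the cone up to sign, the lines they span are nearly parallel. -/
theorem min_angle_le_of_inCone_or_neg {e : V} {δ : ℝ} (he : ‖e‖ = 1) (h0 : 0 ≤ δ) (hπ : δ ≤ π)
    {u v : V} (hu : InCone e δ u ∨ InCone e δ (-u)) (hv : InCone e δ v ∨ InCone e δ (-v)) :
    min (InnerProductGeometry.angle u v) (π - InnerProductGeometry.angle u v) ≤ 2 * δ := by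
  rcases hu with hu | hu <;> rcases hv with hv | hv <;>
    have h := hu.angle_le_two_mul he h0 hπ hv
  · exact min_le_of_left_le h
  · rw [InnerProductGeometry.angle_neg_right] at h
    exact min_le_of_right_le h
  · rw [InnerProductGeometry.angle_neg_left] at h
    exact min_le_of_right_le h
  · rw [InnerProductGeometry.angle_neg_neg] at h
    exact min_le_of_left_le h

end Cone

/-- The unit vector bisecting the `i`-th of `r` equal sectors of the upper half plane. -/
noncomputable def sectorAxis (r i : ℕ) : EuclideanSpace ℝ (Fin 2) :=
  !₂[cos ((2 * i + 1) * (π / (2 * r))), sin ((2 * i + 1) * (π / (2 * r)))]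

theorem norm_sectorAxis (r i : ℕ) : ‖sectorAxis r i‖ = 1 := by
  simp [sectorAxis, EuclideanSpace.norm_eq, Fin.sum_univ_two]

theorem exists_abs_sub_sector_le {r : ℕ} (hr : 0 < r) {φ : ℝ} (h0 : 0 ≤ φ) (hπ : φ ≤ π) :
    ∃ i : Fin r, |φ - (2 * (i : ℕ) + 1) * (π / (2 * r))| ≤ π / (2 * r) := by
  have hr' : (0 : ℝ) < r := by exact_mod_cast hr
  have hδ : 0 < π / (2 * r) := by positivity
  set δ := π / (2 * r) with hδ_def
  have hrδ : 2 * r * δ = π := by rw [hδ_def]; field_simp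
  by_cases htop : φ = π
  · refine ⟨⟨r - 1, by omega⟩, ?_⟩
    have hcast : ((r - 1 : ℕ) : ℝ) = r - 1 := by rw [Nat.cast_sub hr, Nat.cast_one]
    simp only [hcast]
    rw [abs_le]
    constructor <;> nlinarith
  · have hlt : φ < π := lt_of_le_of_ne hπ htop
    have hnonneg : 0 ≤ φ / (2 * δ) := by positivity
    have h₁ := Nat.floor_le hnonneg
    have h₂ := Nat.lt_floor_add_one (φ / (2 * δ))
    have hfloor : ⌊φ / (2 * δ)⌋₊ < r := by
      rw [Nat.floor_lt hnonneg, div_lt_iff₀ (by positivity)]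
      linarith
    rw [le_div_iff₀ (by positivity)] at h₁
    rw [div_lt_iff₀ (by positivity)] at h₂
    refine ⟨⟨_, hfloor⟩, ?_⟩
    rw [abs_le]
    constructor <;> dsimp only <;> linarith

theorem exists_inCone_sectorAxis {r : ℕ} (hr : 0 < r) {v : EuclideanSpace ℝ (Fin 2)}
    (hv : v ≠ 0) (hv1 : 0 ≤ v 1) : ∃ i : Fin r, InCone (sectorAxis r i) (π / (2 * r)) v := by
  let z : ℂ := ⟨v 0, v 1⟩
  have hnorm : ‖z‖ = ‖v‖ := by
    rw [Complex.norm_def, Complex.normSq_apply, EuclideanSpace.norm_eq, Fin.sum_univ_two]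
    simp [z, sq]
  obtain ⟨i, hi⟩ := exists_abs_sub_sector_le hr (Complex.arg_nonneg_iff.2 hv1 : 0 ≤ z.arg)
    (Complex.arg_le_pi z)
  refine ⟨i, hv, ?_⟩
  have hle : π / (2 * r) ≤ π := by
    have : (1 : ℝ) ≤ r := by exact_mod_cast hr
    exact div_le_self pi_pos.le (by linarith)
  have hcos := cos_le_cos_of_nonneg_of_le_pi (abs_nonneg _) hle hi
  rw [cos_abs, cos_sub] at hcos
  have h0 : ‖z‖ * cos z.arg = v 0 := Complex.norm_mul_cos_arg z
  have h1 : ‖z‖ * sin z.arg = v 1 := Complex.norm_mul_sin_arg z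
  have hinner : inner ℝ v (sectorAxis r i) = v 0 * cos ((2 * (i : ℕ) + 1) * (π / (2 * r))) +
      v 1 * sin ((2 * (i : ℕ) + 1) * (π / (2 * r))) := by
    simp [PiLp.inner_apply, Fin.sum_univ_two, sectorAxis, mul_comm]
  rw [hinner, ← h0, ← h1, ← hnorm]
  have := mul_le_mul_of_nonneg_left hcos (norm_nonneg z)
  linarith

/-- More than `m ^ r` points in the plane contain `m + 1` points all of whose angles are within
`π / r` of `0` or `π`. -/
theorem exists_subset_min_angle_le {r m : ℕ} (hr : 2 ≤ r)
    (S : Finset (EuclideanSpace ℝ (Fin 2))) (hcard : m ^ r < S.card) :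
    ∃ T ⊆ S, T.card = m + 1 ∧ ∀ A ∈ T, ∀ B ∈ T, ∀ D ∈ T, A ≠ B → B ≠ D →
      min (∠ A B D) (π - ∠ A B D) ≤ π / r := by
  have hr' : (2 : ℝ) ≤ r := by exact_mod_cast hr
  have hδ0 : 0 < π / (2 * r) := by positivity
  have hδ : π / (2 * r) < π / 2 :=
    div_lt_div_of_pos_left pi_pos (by norm_num) (by linarith)
  have hcos : 0 < cos (π / (2 * r)) := cos_pos_of_mem_Ioo ⟨by linarith, hδ⟩
  obtain ⟨i, T, hTS, hT, hchain⟩ := exists_chain_of_pow_lt_card (r := r) S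
    (fun i A B => InCone (sectorAxis r i) (π / (2 * r)) (B - A))
    (fun i A h => h.1 (sub_self A))
    (fun i A B D h₁ h₂ => by simpa using h₂.add hcos h₁)
    (fun A _ B _ hAB => by
      rcases le_total 0 ((B - A) 1) with h | h
      · obtain ⟨i, hi⟩ := exists_inCone_sectorAxis (r := r) (by omega)
          (sub_ne_zero.2 hAB.symm) h
        exact ⟨i, Or.inl hi⟩
      · obtain ⟨i, hi⟩ := exists_inCone_sectorAxis (r := r) (v := A - B) (by omega)
          (sub_ne_zero.2 hAB) (by simpa using h)
        exact ⟨i, Or.inr hi⟩)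
    hcard
  refine ⟨T, hTS, hT, fun A hA B hB D hD hAB hBD => ?_⟩
  have h := min_angle_le_of_inCone_or_neg (u := A - B) (v := D - B) (norm_sectorAxis r i) hδ0.le
    (by linarith [pi_pos]) (by simpa using hchain B hB A hA hAB.symm)
    (by simpa using hchain B hB D hD hBD)
  calc min (∠ A B D) (π - ∠ A B D) ≤ 2 * (π / (2 * r)) := h
    _ = π / r := by field_simp

/-- **Proposition 3.1 (Δ_k(n) ≤ C·log k / log n).** There is a constant C > 0 such that any
n ≥ k ≥ 3 points in the plane contain a k-subset all of whose angles are within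
C·log(k)/log(n) of 0° or 180°. -/
theorem delta_upper_bound :
    ∃ C : ℝ, 0 < C ∧ ∀ n k : ℕ, 3 ≤ k → k ≤ n →
      ∀ S : Finset (EuclideanSpace ℝ (Fin 2)), S.card = n →
        ∃ T ⊆ S, T.card = k ∧
          ∀ A ∈ T, ∀ B ∈ T, ∀ D ∈ T, A ≠ B → B ≠ D → A ≠ D →
            min (∠ A B D) (π - ∠ A B D) ≤ C * Real.log k / Real.log n := by
  refine ⟨2 * π, by positivity, fun n k hk hkn S hS => ?_⟩
  set r := Nat.log k n
  have hr : 1 ≤ r := Nat.log_pos (by omega) hkn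
  have hr' : (1 : ℝ) ≤ r := by exact_mod_cast hr
  have hpow : k ^ r ≤ n := Nat.pow_log_le_self k (by omega)
  have hlogk : 0 < Real.log k := log_pos (by exact_mod_cast (by omega : 1 < k))
  have hlogn : 0 < Real.log n := log_pos (by exact_mod_cast (by omega : 1 < n))
  have hlog : Real.log n ≤ (r + 1) * Real.log k := by
    have hlt : n < k ^ (r + 1) := Nat.lt_pow_succ_log_self (by omega) n
    have h : (n : ℝ) ≤ (k : ℝ) ^ (r + 1) := by exact_mod_cast hlt.le
    have h' := log_le_log (by exact_mod_cast (by omega : 0 < n)) h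
    rw [log_pow] at h'
    exact_mod_cast h'
  have hbound : π / r ≤ 2 * π * Real.log k / Real.log n := by
    rw [div_le_div_iff₀ (by linarith) hlogn]
    have : Real.log n ≤ 2 * r * Real.log k := by nlinarith
    nlinarith [pi_pos]
  rcases hr.eq_or_lt with hr1 | hr2
  · obtain ⟨T, hTS, hT⟩ := Finset.exists_subset_card_eq (hS ▸ hkn)
    refine ⟨T, hTS, hT, fun A _ B _ D _ _ _ _ => ?_⟩
    refine (min_le_left _ _).trans ((angle_le_pi A B D).trans (le_trans ?_ hbound))
    simp [← hr1]
  · have hcard : (k - 1) ^ r < S.card :=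
      hS ▸ (Nat.pow_lt_pow_left (by omega) (by omega)).trans_le hpow
    obtain ⟨T, hTS, hT, hangle⟩ := exists_subset_min_angle_le hr2 S hcard
    exact ⟨T, hTS, by omega, fun A hA B hB D hD hAB hBD _ =>
      (hangle A hA B hB D hD hAB hBD).trans hbound⟩
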